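/- Let σ > 0 and T > 0. Assume: (a) each X_i is divergence-free and there are C₀ ≥ 0 and κ ∈ ℕ with |X_i(x)| + ‖DX_i(x)‖ ≤ C₀(1+|x|)^κ for all x ∈ ℝ^d and all i; (b) B : [0,T]×ℝ^d → ℝ^m is continuous and bounded, each B(t,·) is C¹, and div_G B is continuous and bounded on [0,T]×ℝ^d; (c) Q : [0,T]×ℝ^d → ℝ is continuous and bounded; (d) N : ℝ^d → [0,∞) is continuous, N² ∈ C²(ℝ^d), and there are constants C ≥ 0, c₀ > 0, ε₀ > 0 such that |∇_G(N²)(x)|² ≤ C N(x)² and |Δ_G(N²)(x)| ≤ C for all x, and N(x) ≥ c₀ |x|^{ε₀} whenever |x| ≥ 1. Let ρ₀ : ℝ^d → ℝ and let ρ₁, ρ₂ : [0,T]×ℝ^d → ℝ be continuous functions which on (0,T)×ℝ^d are C¹ in t and C² in x with all these derivatives continuous in (t,x), which satisfy ∂_t ρ_j − σ Δ_G ρ_j + B·∇_G ρ_j + Q ρ_j = 0 pointwise on (0,T)×ℝ^d and ρ_j(0,·) = ρ₀, and for which there exists β > 0 with ∫₀^T ∫_{ℝ^d} |ρ_j(t,x)|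 e^{−β(N(x)²+1)} dx dt < ∞ for j = 1,2. Then ρ₁ = ρ₂ on [0,T]×ℝ^d. -/

import Mathlib

open MeasureTheory Set

noncomputable section

/-- Derivative of `f : ℝ^d → ℝ` along the vector field `X` (horizontal derivative `X f`). -/
def vderiv {d : ℕ} (X : (Fin d → ℝ) → (Fin d → ℝ)) (f : (Fin d → ℝ) → ℝ)
    (x : Fin d → ℝ) : ℝ := fderiv ℝ f x (X x)

/-- Squared Euclidean norm of the horizontal gradient `∇_G f`. -/
def hgradSq {d m : ℕ} (X : Fin m → (Fin d → ℝ) → (Fin d → ℝ)) (f : (Fin d → ℝ) → ℝ)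
    (x : Fin d → ℝ) : ℝ := ∑ i, (vderiv (X i) f x) ^ 2

/-- Horizontal Laplacian `Δ_G f = Σ X_i (X_i f)`. -/
def hLap {d m : ℕ} (X : Fin m → (Fin d → ℝ) → (Fin d → ℝ)) (f : (Fin d → ℝ) → ℝ)
    (x : Fin d → ℝ) : ℝ := ∑ i, vderiv (X i) (vderiv (X i) f) x

/-- Horizontal divergence `div_G B = Σ X_i B_i`. -/
def hdiv {d m : ℕ} (X : Fin m → (Fin d → ℝ) → (Fin d → ℝ)) (B : (Fin d → ℝ) → Fin m → ℝ)
    (x : Fin d → ℝ) : ℝ := ∑ i, vderiv (X i) (fun y => B y i) x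

/-- Euclidean divergence `Σ_j ∂_{x_j} X^j` of a vector field on `ℝ^d`. -/
def ediv {d : ℕ} (X : (Fin d → ℝ) → (Fin d → ℝ)) (x : Fin d → ℝ) : ℝ :=
  ∑ j, fderiv ℝ X x (Pi.single j 1) j

/-- Anisotropic dilations `δ_λ x = (λ^{w_1} x_1, …, λ^{w_d} x_d)`. -/
def dil {d : ℕ} (w : Fin d → ℕ) (l : ℝ) (x : Fin d → ℝ) : Fin d → ℝ :=
  fun i => l ^ (w i) * x i

/-- A vector field is `δ`-homogeneous of degree one. -/
def homogOne {d : ℕ} (w : Fin d → ℕ) (X : (Fin d → ℝ) → (Fin d → ℝ)) : Prop :=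
  ∀ l : ℝ, 0 < l → ∀ x, fderiv ℝ (dil w l) x (X x) = l • X (dil w l x)

/-!
The difference `u` of two solutions solves the same equation with zero initial datum. Put
`V = N ^ 2 + 1` and test a smooth convex approximation of `|u|` against a cutoff at `V ≈ R` times
`exp (-h V)`. By Kato's inequality and integration by parts, which leaves no boundary or divergence
terms of the fields `X i`, every operator falls on the weight. Since `|∇_G V| ^ 2` is `O(V)` while
`Δ_G V`, `B`, `div_G B` and `Q` are bounded, the result is `O(V)` times the weight, plus cutoff
errors of size `O(1 / R)`. Letting the rate `h` increase with speed `K` in time contributes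
`-K V` times the weight, which absorbs the first part; the integrability hypothesis lets the second
vanish as `R → ∞`. The rate may only grow by `1`, so this gives `u = 0` for a time `1 / K`, and one
iterates.
-/

section VectorField

variable {d : ℕ} {X : (Fin d → ℝ) → Fin d → ℝ} {f g : (Fin d → ℝ) → ℝ} {x : Fin d → ℝ}

lemma contDiff_vderiv {k n : WithTop ℕ∞} (hX : ContDiff ℝ k X) (hf : ContDiff ℝ n f)
    (hkn : k + 1 ≤ n) : ContDiff ℝ k (vderiv X f) :=
  (hf.fderiv_right hkn).clm_apply hX

lemma continuous_vderiv (hX : Continuous X) (hf : ContDiff ℝ 1 f) : Continuous (vderiv X f) :=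
  (hf.continuous_fderiv one_ne_zero).clm_apply hX

lemma support_vderiv_subset : Function.support (vderiv X f) ⊆ tsupport f := fun x hx =>
  support_fderiv_subset ℝ fun h => hx (by rw [vderiv, h, zero_apply])

lemma vderiv_comp {φ : ℝ → ℝ} (hφ : DifferentiableAt ℝ φ (f x)) (hf : DifferentiableAt ℝ f x) :
    vderiv X (fun y => φ (f y)) x = deriv φ (f x) * vderiv X f x := by
  have h : HasFDerivAt (fun y => φ (f y)) _ x :=
    hφ.hasDerivAt.comp_hasFDerivAt x hf.hasFDerivAt
  rw [vderiv, h.fderiv]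
  rfl

lemma vderiv_mul (hf : DifferentiableAt ℝ f x) (hg : DifferentiableAt ℝ g x) :
    vderiv X (fun y => f y * g y) x = f x * vderiv X g x + g x * vderiv X f x := by
  rw [vderiv, fderiv_fun_mul hf hg]
  rfl

lemma vderiv_sub (hf : DifferentiableAt ℝ f x) (hg : DifferentiableAt ℝ g x) :
    vderiv X (fun y => f y - g y) x = vderiv X f x - vderiv X g x := by
  rw [vderiv, fderiv_fun_sub hf hg]
  rfl

lemma vderiv_add_const (c : ℝ) : vderiv X (fun y => f y + c) = vderiv X f := by
  funext x
  rw [vderiv, fderiv_add_const, vderiv]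

lemma integral_fderiv_apply_eq_zero {E : Type*} [NormedAddCommGroup E] [NormedSpace ℝ E]
    [FiniteDimensional ℝ E] [MeasurableSpace E] [BorelSpace E] {μ : Measure E}
    [μ.IsAddHaarMeasure] {f : E → ℝ} (hf : ContDiff ℝ 1 f) (hf_supp : HasCompactSupport f)
    (v : E) : ∫ x, fderiv ℝ f x v ∂μ = 0 := by
  have hfderiv : Integrable (fun x => fderiv ℝ f x v) μ :=
    ((hf.continuous_fderiv one_ne_zero).clm_apply
      continuous_const).integrable_of_hasCompactSupport (hf_supp.fderiv_apply ℝ v)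
  simpa using integral_mul_fderiv_eq_neg_fderiv_mul_of_integrable (μ := μ) (v := v)
    (f := fun _ => (1 : ℝ)) (g := f) (by simp) (by simpa using hfderiv)
    (by simpa using hf.continuous.integrable_of_hasCompactSupport hf_supp)
    (fun _ _ => differentiableAt_const _) fun x _ => hf.differentiable one_ne_zero x

lemma sum_fderiv_mul_apply_single (hX : DifferentiableAt ℝ X x) (hf : DifferentiableAt ℝ f x) :
    ∑ j, fderiv ℝ (fun y => X y j * f y) x (Pi.single j 1)
      = vderiv X f x + ediv X x * f x := by
  have hcoord (j : Fin d) : fderiv ℝ (fun y => X y j * f y) x (Pi.single j 1)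
      = X x j * fderiv ℝ f x (Pi.single j 1) + fderiv ℝ X x (Pi.single j 1) j * f x := by
    have h : HasFDerivAt (fun y => X y j * f y) _ x :=
      (hasFDerivAt_pi'.1 hX.hasFDerivAt j).mul hf.hasFDerivAt
    rw [h.fderiv]
    simp [mul_comm]
  have hexpand : vderiv X f x = ∑ j, X x j * fderiv ℝ f x (Pi.single j 1) := by
    conv_lhs => rw [vderiv, pi_eq_sum_univ' (X x), map_sum]
    simp
  rw [hexpand, ediv, Finset.sum_mul, ← Finset.sum_add_distrib]
  exact Finset.sum_congr rfl fun j _ => hcoord j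

lemma integral_vderiv_eq_zero (hX : ContDiff ℝ 1 X) (hX_div : ∀ x, ediv X x = 0)
    (hf : ContDiff ℝ 1 f) (hf_supp : HasCompactSupport f) : ∫ x, vderiv X f x = 0 := by
  have hXf (j : Fin d) : ContDiff ℝ 1 fun y => X y j * f y := (contDiff_pi.1 hX j).mul hf
  have hXf_supp (j : Fin d) : HasCompactSupport fun y => X y j * f y := hf_supp.mul_left
  calc ∫ x, vderiv X f x
      = ∫ x, ∑ j, fderiv ℝ (fun y => X y j * f y) x (Pi.single j 1) := by
        refine integral_congr_ae (.of_forall fun x => ?_)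
        simp only [sum_fderiv_mul_apply_single (hX.differentiable one_ne_zero x)
          (hf.differentiable one_ne_zero x), hX_div x, zero_mul, add_zero]
    _ = ∑ j, ∫ x, fderiv ℝ (fun y => X y j * f y) x (Pi.single j 1) :=
        integral_finsetSum _ fun j _ => (((hXf j).continuous_fderiv one_ne_zero).clm_apply
          continuous_const).integrable_of_hasCompactSupport ((hXf_supp j).fderiv_apply ℝ _)
    _ = 0 := Finset.sum_eq_zero fun j _ => integral_fderiv_apply_eq_zero (hXf j) (hXf_supp j) _

lemma integral_mul_vderiv (hX : ContDiff ℝ 1 X) (hX_div : ∀ x, ediv X x = 0)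
    (hf : ContDiff ℝ 1 f) (hg : ContDiff ℝ 1 g) (hg_supp : HasCompactSupport g) :
    ∫ x, g x * vderiv X f x = -∫ x, f x * vderiv X g x := by
  have hgf : Integrable fun x => g x * vderiv X f x :=
    (hg.continuous.mul (continuous_vderiv hX.continuous hf)).integrable_of_hasCompactSupport
      hg_supp.mul_right
  have hfg : Integrable fun x => f x * vderiv X g x :=
    (hf.continuous.mul (continuous_vderiv hX.continuous hg)).integrable_of_hasCompactSupport
      (hg_supp.mono' support_vderiv_subset).mul_left
  rw [eq_neg_iff_add_eq_zero, add_comm, ← integral_add hfg hgf,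
    ← integral_vderiv_eq_zero hX hX_div (hf.mul hg) hg_supp.mul_left]
  exact integral_congr_ae (.of_forall fun x => (vderiv_mul (hf.differentiable one_ne_zero x)
    (hg.differentiable one_ne_zero x)).symm)

lemma integral_mul_vderiv_vderiv (hX : ContDiff ℝ 1 X) (hX_div : ∀ x, ediv X x = 0)
    (hf : ContDiff ℝ 2 f) (hg : ContDiff ℝ 2 g) (hg_supp : HasCompactSupport g) :
    ∫ x, g x * vderiv X (vderiv X f) x = ∫ x, f x * vderiv X (vderiv X g) x := by
  have hXf : ContDiff ℝ 1 (vderiv X f) := contDiff_vderiv hX hf one_add_one_eq_two.le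
  have hXg : ContDiff ℝ 1 (vderiv X g) := contDiff_vderiv hX hg one_add_one_eq_two.le
  rw [integral_mul_vderiv hX hX_div hXf (hg.of_le one_le_two) hg_supp,
    ← neg_eq_iff_eq_neg.2 (integral_mul_vderiv hX hX_div (hf.of_le one_le_two) hXg
      (hg_supp.mono' support_vderiv_subset))]
  simp only [mul_comm]

end VectorField

/-- The drift-diffusion generator `σ Δ_G + b · ∇_G`, in terms of which the equation
`∂ₜ ρ - σ Δ_G ρ + B · ∇_G ρ + Q ρ = 0` reads `∂ₜ ρ = hgen X σ (-B) ρ - Q ρ`. -/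
def hgen {d m : ℕ} (X : Fin m → (Fin d → ℝ) → Fin d → ℝ) (σ : ℝ)
    (b : (Fin d → ℝ) → Fin m → ℝ) (f : (Fin d → ℝ) → ℝ) (x : Fin d → ℝ) : ℝ :=
  σ * hLap X f x + ∑ i, b x i * vderiv (X i) f x

section Generator

variable {d m : ℕ} {X : Fin m → (Fin d → ℝ) → Fin d → ℝ} {σ : ℝ}
  {b : (Fin d → ℝ) → Fin m → ℝ} {f g : (Fin d → ℝ) → ℝ}

lemma continuous_hgen (hX : ∀ i, ContDiff ℝ 1 (X i)) (hb : ∀ i, Continuous fun x => b x i)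
    (hf : ContDiff ℝ 2 f) : Continuous (hgen X σ b f) := by
  have hXf (i : Fin m) : ContDiff ℝ 1 (vderiv (X i) f) :=
    contDiff_vderiv (hX i) hf one_add_one_eq_two.le
  exact (continuous_const.mul (continuous_finsetSum _ fun i _ =>
    continuous_vderiv (hX i).continuous (hXf i))).add
    (continuous_finsetSum _ fun i _ => (hb i).mul (hXf i).continuous)

lemma continuous_hdiv (hX : ∀ i, Continuous (X i)) (hb : ∀ i, ContDiff ℝ 1 fun x => b x i) :
    Continuous (hdiv X b) :=
  continuous_finsetSum _ fun i _ => continuous_vderiv (hX i) (hb i)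

lemma support_hgen_subset : Function.support (hgen X σ b f) ⊆ tsupport f := fun x hx => by
  by_contra hxf
  have hfirst (i : Fin m) : vderiv (X i) f x = 0 :=
    Function.notMem_support.1 fun h => hxf (support_vderiv_subset h)
  have hsecond (i : Fin m) : vderiv (X i) (vderiv (X i) f) x = 0 :=
    Function.notMem_support.1 fun h =>
      hxf (closure_minimal support_vderiv_subset isClosed_closure (support_vderiv_subset h))
  exact hx (by simp only [hgen, hLap, hfirst, hsecond, mul_zero, Finset.sum_const_zero, add_zero])

lemma hgen_sub (hX : ∀ i, ContDiff ℝ 1 (X i)) (hf : ContDiff ℝ 2 f) (hg : ContDiff ℝ 2 g)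
    (x : Fin d → ℝ) :
    hgen X σ b (fun y => f y - g y) x = hgen X σ b f x - hgen X σ b g x := by
  have hfirst (i : Fin m) : vderiv (X i) (fun y => f y - g y)
      = fun y => vderiv (X i) f y - vderiv (X i) g y := funext fun y =>
    vderiv_sub (hf.differentiable two_ne_zero y) (hg.differentiable two_ne_zero y)
  have hsecond (i : Fin m) : vderiv (X i) (fun y => vderiv (X i) f y - vderiv (X i) g y) x
      = vderiv (X i) (vderiv (X i) f) x - vderiv (X i) (vderiv (X i) g) x :=
    vderiv_sub ((contDiff_vderiv (hX i) hf one_add_one_eq_two.le).differentiable one_ne_zero x)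
      ((contDiff_vderiv (hX i) hg one_add_one_eq_two.le).differentiable one_ne_zero x)
  simp only [hgen, hLap, hfirst, hsecond, mul_sub, Finset.sum_sub_distrib]
  ring

lemma hLap_comp {φ : ℝ → ℝ} (hX : ∀ i, ContDiff ℝ 1 (X i)) (hφ : ContDiff ℝ 2 φ)
    (hf : ContDiff ℝ 2 f) (x : Fin d → ℝ) :
    hLap X (fun y => φ (f y)) x
      = deriv φ (f x) * hLap X f x + deriv (deriv φ) (f x) * hgradSq X f x := by
  have hφ' : ContDiff ℝ 1 (deriv φ) := (contDiff_succ_iff_deriv.1 hφ).2.2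
  have hfd : Differentiable ℝ f := hf.differentiable two_ne_zero
  have hterm (i : Fin m) : vderiv (X i) (vderiv (X i) fun y => φ (f y)) x
      = deriv φ (f x) * vderiv (X i) (vderiv (X i) f) x
        + deriv (deriv φ) (f x) * vderiv (X i) f x ^ 2 := by
    have hfirst : (vderiv (X i) fun y => φ (f y)) = fun y => deriv φ (f y) * vderiv (X i) f y :=
      funext fun y => vderiv_comp (hφ.differentiable two_ne_zero _) (hfd y)
    have hφ'f : ContDiff ℝ 1 fun y => deriv φ (f y) := hφ'.comp (hf.of_le one_le_two)
    rw [hfirst, vderiv_mul (hφ'f.differentiable one_ne_zero x)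
      ((contDiff_vderiv (hX i) hf one_add_one_eq_two.le).differentiable one_ne_zero x),
      vderiv_comp (hφ'.differentiable one_ne_zero _) (hfd x)]
    ring
  simp only [hLap, hgradSq, hterm, Finset.sum_add_distrib, Finset.mul_sum]

lemma hgen_comp {φ : ℝ → ℝ} (hX : ∀ i, ContDiff ℝ 1 (X i)) (hφ : ContDiff ℝ 2 φ)
    (hf : ContDiff ℝ 2 f) (x : Fin d → ℝ) :
    hgen X σ b (fun y => φ (f y)) x
      = deriv φ (f x) * hgen X σ b f x + σ * deriv (deriv φ) (f x) * hgradSq X f x := by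
  have hfirst (i : Fin m) : vderiv (X i) (fun y => φ (f y)) x = deriv φ (f x) * vderiv (X i) f x :=
    vderiv_comp (hφ.differentiable two_ne_zero _) (hf.differentiable two_ne_zero x)
  simp only [hgen, hLap_comp hX hφ hf, hfirst, mul_left_comm _ (deriv φ (f x)), ← Finset.mul_sum]
  ring

lemma integral_mul_diffusion {X : (Fin d → ℝ) → Fin d → ℝ} {b : (Fin d → ℝ) → ℝ}
    (hX : ContDiff ℝ 1 X) (hX_div : ∀ x, ediv X x = 0) (hb : ContDiff ℝ 1 b)
    (hf : ContDiff ℝ 2 f) (hg : ContDiff ℝ 2 g) (hg_supp : HasCompactSupport g) :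
    ∫ x, g x * (σ * vderiv X (vderiv X f) x - b x * vderiv X f x)
      = ∫ x, f x * (σ * vderiv X (vderiv X g) x + b x * vderiv X g x + vderiv X b x * g x) := by
  have hf₁ : ContDiff ℝ 1 f := hf.of_le one_le_two
  have hg₁ : ContDiff ℝ 1 g := hg.of_le one_le_two
  have hcont {h : (Fin d → ℝ) → ℝ} (hh : ContDiff ℝ 2 h) : Continuous (vderiv X (vderiv X h)) :=
    continuous_vderiv hX.continuous (contDiff_vderiv hX hh one_add_one_eq_two.le)
  have hXg_supp : HasCompactSupport (vderiv X g) := hg_supp.mono' support_vderiv_subset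
  have hbg : ContDiff ℝ 1 fun x => b x * g x := hb.mul hg₁
  have hbg_supp : HasCompactSupport fun x => b x * g x := hg_supp.mul_left
  have hleibniz (x : Fin d → ℝ) :
      vderiv X (fun y => b y * g y) x = b x * vderiv X g x + g x * vderiv X b x :=
    vderiv_mul (hb.differentiable one_ne_zero x) (hg₁.differentiable one_ne_zero x)
  calc ∫ x, g x * (σ * vderiv X (vderiv X f) x - b x * vderiv X f x)
      = ∫ x, (σ * (g x * vderiv X (vderiv X f) x) - (b x * g x) * vderiv X f x) := by
        congr 1 with x; ring
    _ = σ * (∫ x, g x * vderiv X (vderiv X f) x) - ∫ x, (b x * g x) * vderiv X f x := by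
        rw [integral_sub, integral_const_mul]
        · exact ((hg.continuous.mul (hcont hf)).integrable_of_hasCompactSupport
            hg_supp.mul_right).const_mul σ
        · exact (hbg.continuous.mul (continuous_vderiv hX.continuous
            hf₁)).integrable_of_hasCompactSupport hbg_supp.mul_right
    _ = σ * (∫ x, f x * vderiv X (vderiv X g) x)
          + ∫ x, f x * vderiv X (fun y => b y * g y) x := by
        rw [integral_mul_vderiv_vderiv hX hX_div hf hg hg_supp,
          integral_mul_vderiv hX hX_div hf₁ hbg hbg_supp, sub_neg_eq_add]
    _ = ∫ x, (σ * (f x * vderiv X (vderiv X g) x) + f x * vderiv X (fun y => b y * g y) x) := by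
        rw [integral_add, integral_const_mul]
        · exact ((hf.continuous.mul (hcont hg)).integrable_of_hasCompactSupport
            (hXg_supp.mono' support_vderiv_subset).mul_left).const_mul σ
        · exact (hf.continuous.mul (continuous_vderiv hX.continuous
            hbg)).integrable_of_hasCompactSupport
            (hbg_supp.mono' support_vderiv_subset).mul_left
    _ = _ := by congr 1 with x; rw [hleibniz]; ring

lemma integral_mul_hgen (hX : ∀ i, ContDiff ℝ 1 (X i)) (hX_div : ∀ i x, ediv (X i) x = 0)
    (hb : ∀ i, ContDiff ℝ 1 fun x => b x i) (hf : ContDiff ℝ 2 f) (hg : ContDiff ℝ 2 g)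
    (hg_supp : HasCompactSupport g) :
    ∫ x, g x * hgen X σ (-b) f x = ∫ x, f x * (hgen X σ b g x + hdiv X b x * g x) := by
  have hcont {h : (Fin d → ℝ) → ℝ} (hh : ContDiff ℝ 2 h) (i : Fin m) :
      Continuous (vderiv (X i) h) ∧ Continuous (vderiv (X i) (vderiv (X i) h)) :=
    have hXh := contDiff_vderiv (hX i) hh one_add_one_eq_two.le
    ⟨hXh.continuous, continuous_vderiv (hX i).continuous hXh⟩
  have hXg_supp (i : Fin m) : HasCompactSupport (vderiv (X i) g) :=
    hg_supp.mono' support_vderiv_subset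
  calc ∫ x, g x * hgen X σ (-b) f x
      = ∫ x, ∑ i, g x * (σ * vderiv (X i) (vderiv (X i) f) x - b x i * vderiv (X i) f x) := by
        simp only [hgen, hLap, Pi.neg_apply, neg_mul, Finset.sum_neg_distrib, ← Finset.mul_sum,
          Finset.sum_sub_distrib, ← sub_eq_add_neg]
    _ = ∑ i, ∫ x, g x * (σ * vderiv (X i) (vderiv (X i) f) x - b x i * vderiv (X i) f x) := by
        refine integral_finsetSum _ fun i _ => Continuous.integrable_of_hasCompactSupport
          (hg.continuous.mul ?_) hg_supp.mul_right
        exact (continuous_const.mul (hcont hf i).2).sub ((hb i).continuous.mul (hcont hf i).1)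
    _ = ∑ i, ∫ x, f x * (σ * vderiv (X i) (vderiv (X i) g) x + b x i * vderiv (X i) g x
          + vderiv (X i) (fun y => b y i) x * g x) :=
        Finset.sum_congr rfl fun i _ =>
          integral_mul_diffusion (hX i) (hX_div i) (hb i) hf hg hg_supp
    _ = ∫ x, ∑ i, f x * (σ * vderiv (X i) (vderiv (X i) g) x + b x i * vderiv (X i) g x
          + vderiv (X i) (fun y => b y i) x * g x) := by
        refine (integral_finsetSum _ fun i _ => Continuous.integrable_of_hasCompactSupport
          (hf.continuous.mul ?_) (HasCompactSupport.mul_left ?_)).symm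
        · exact ((continuous_const.mul (hcont hg i).2).add
            ((hb i).continuous.mul (hcont hg i).1)).add
            ((continuous_vderiv (hX i).continuous (hb i)).mul hg.continuous)
        · exact (((hXg_supp i).mono' support_vderiv_subset).mul_left.add
            (hXg_supp i).mul_left).add hg_supp.mul_left
    _ = _ := by
        simp only [hgen, hLap, hdiv, ← Finset.mul_sum, Finset.sum_add_distrib, Finset.sum_mul]

end Generator

/-- A smooth convex approximation of `|v|` vanishing at `0`. -/
def softAbs (v : ℝ) : ℝ := √(1 + v ^ 2) - 1

section SoftAbs

lemma one_le_sqrt_one_add_sq (v : ℝ) : 1 ≤ √(1 + v ^ 2) :=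
  Real.one_le_sqrt.2 (le_add_of_nonneg_right (sq_nonneg v))

lemma sq_sqrt_one_add_sq (v : ℝ) : √(1 + v ^ 2) ^ 2 = 1 + v ^ 2 :=
  Real.sq_sqrt (by positivity)

lemma contDiff_sqrt_one_add_sq {n : WithTop ℕ∞} : ContDiff ℝ n fun v : ℝ => √(1 + v ^ 2) :=
  (contDiff_const.add (contDiff_id.pow 2)).sqrt fun v => by positivity

lemma contDiff_softAbs {n : WithTop ℕ∞} : ContDiff ℝ n softAbs :=
  contDiff_sqrt_one_add_sq.sub contDiff_const

lemma continuous_softAbs : Continuous softAbs := (contDiff_softAbs (n := 0)).continuous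

lemma hasDerivAt_softAbs (v : ℝ) : HasDerivAt softAbs (v / √(1 + v ^ 2)) v := by
  have h : HasDerivAt (fun v : ℝ => 1 + v ^ 2) (2 * v) v := by
    simpa using (hasDerivAt_pow 2 v).const_add 1
  exact ((h.sqrt (by positivity)).sub_const 1).congr_deriv (mul_div_mul_left v _ two_ne_zero)

lemma deriv_softAbs : deriv softAbs = fun v => v / √(1 + v ^ 2) :=
  funext fun v => (hasDerivAt_softAbs v).deriv

lemma deriv_deriv_softAbs_nonneg (v : ℝ) : 0 ≤ deriv (deriv softAbs) v := by
  have hsqrt : HasDerivAt (fun v : ℝ => √(1 + v ^ 2)) (v / √(1 + v ^ 2)) v := by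
    simpa [softAbs] using (hasDerivAt_softAbs v).add_const 1
  have hpos : 0 < √(1 + v ^ 2) := by positivity
  rw [deriv_softAbs, ((hasDerivAt_id' v).fun_div hsqrt hpos.ne').deriv]
  refine div_nonneg ?_ (sq_nonneg _)
  rw [one_mul, sub_nonneg, ← mul_div_assoc, div_le_iff₀ hpos]
  nlinarith [sq_sqrt_one_add_sq v]

lemma softAbs_nonneg (v : ℝ) : 0 ≤ softAbs v := sub_nonneg.2 (one_le_sqrt_one_add_sq v)

@[simp]
lemma softAbs_eq_zero_iff {v : ℝ} : softAbs v = 0 ↔ v = 0 := by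
  simp [softAbs, sub_eq_zero]

lemma softAbs_le_abs (v : ℝ) : softAbs v ≤ |v| := by
  rw [softAbs, sub_le_iff_le_add, Real.sqrt_le_left (by positivity)]
  nlinarith [abs_nonneg v, sq_abs v]

lemma mul_deriv_softAbs_nonneg (v : ℝ) : 0 ≤ v * deriv softAbs v := by
  rw [deriv_softAbs, ← mul_div_assoc]
  exact div_nonneg (mul_self_nonneg v) (Real.sqrt_nonneg _)

lemma mul_deriv_softAbs_le (v : ℝ) : v * deriv softAbs v ≤ 2 * softAbs v := by
  rw [deriv_softAbs, softAbs, ← mul_div_assoc, div_le_iff₀ (by positivity)]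
  nlinarith [one_le_sqrt_one_add_sq v, sq_sqrt_one_add_sq v]

end SoftAbs

/-- A smooth nonincreasing cutoff, equal to `1` up to `1` and to `0` from `2` on. -/
def cutoff (s : ℝ) : ℝ := Real.smoothTransition (2 - s)

/-- The weight profile: `exp (-h * s)` cut off at the scale `R`. -/
def weight (R h s : ℝ) : ℝ := cutoff (s / R) * Real.exp (-h * s)

section Weight

variable {R h s : ℝ}

lemma contDiff_cutoff {n : ℕ∞} : ContDiff ℝ n cutoff :=
  Real.smoothTransition.contDiff.comp (contDiff_const.sub contDiff_id)

lemma antitone_cutoff : Antitone cutoff := fun _ _ hst =>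
  Real.smoothTransition.monotone (sub_le_sub_left hst 2)

lemma cutoff_nonneg (s : ℝ) : 0 ≤ cutoff s := Real.smoothTransition.nonneg _

lemma cutoff_pos (hs : s < 2) : 0 < cutoff s := Real.smoothTransition.pos_of_pos (by linarith)

lemma cutoff_eq_zero (hs : 2 ≤ s) : cutoff s = 0 :=
  Real.smoothTransition.zero_of_nonpos (by linarith)

lemma cutoff_eq_one (hs : s ≤ 1) : cutoff s = 1 :=
  Real.smoothTransition.one_of_one_le (by linarith)

lemma hasCompactSupport_deriv_cutoff : HasCompactSupport (deriv cutoff) := by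
  refine HasCompactSupport.intro (isCompact_Icc (a := (1 : ℝ)) (b := 2)) fun s hs => ?_
  rcases not_and_or.1 hs with hs | hs
  · have h : cutoff =ᶠ[nhds s] fun _ => 1 :=
      Filter.eventually_of_mem (Iio_mem_nhds (not_le.1 hs)) fun _ hr => cutoff_eq_one (le_of_lt hr)
    simp [h.deriv_eq]
  · have h : cutoff =ᶠ[nhds s] fun _ => 0 :=
      Filter.eventually_of_mem (Ioi_mem_nhds (not_le.1 hs)) fun _ hr => cutoff_eq_zero (le_of_lt hr)
    simp [h.deriv_eq]

lemma exists_abs_deriv_cutoff_le :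
    ∃ M, ∀ s, |deriv cutoff s| ≤ M ∧ |deriv (deriv cutoff) s| ≤ M := by
  have h : ContDiff ℝ 1 (deriv cutoff) :=
    (contDiff_succ_iff_deriv.1 (contDiff_cutoff (n := 2))).2.2
  obtain ⟨M₁, hM₁⟩ := h.continuous.bounded_above_of_compact_support hasCompactSupport_deriv_cutoff
  obtain ⟨M₂, hM₂⟩ := (h.continuous_deriv le_rfl).bounded_above_of_compact_support
    hasCompactSupport_deriv_cutoff.deriv
  exact ⟨max M₁ M₂, fun s => ⟨le_max_of_le_left (hM₁ s), le_max_of_le_right (hM₂ s)⟩⟩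

lemma contDiff_weight {n : ℕ∞} : ContDiff ℝ n (weight R h) :=
  (contDiff_cutoff.comp (contDiff_id.div_const R)).mul (contDiff_const.mul contDiff_id).exp

lemma weight_nonneg : 0 ≤ weight R h s := mul_nonneg (cutoff_nonneg _) (Real.exp_nonneg _)

lemma weight_pos (hR : 0 < R) (hs : s < 2 * R) : 0 < weight R h s :=
  mul_pos (cutoff_pos ((div_lt_iff₀ hR).2 hs)) (Real.exp_pos _)

lemma weight_eq_zero (hR : 0 < R) (hs : 2 * R ≤ s) : weight R h s = 0 := by
  rw [weight, cutoff_eq_zero ((le_div_iff₀ hR).2 hs), zero_mul]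

lemma weight_le_weight {R' : ℝ} (hR : 0 < R) (hRR' : R ≤ R') (hs : 0 ≤ s) :
    weight R h s ≤ weight R' h s :=
  mul_le_mul_of_nonneg_right (antitone_cutoff (div_le_div_of_nonneg_left hs hR hRR'))
    (Real.exp_nonneg _)

lemma hasDerivAt_weight_rate (R s h : ℝ) :
    HasDerivAt (fun h => weight R h s) (-(s * weight R h s)) h :=
  (((hasDerivAt_id h).neg.mul_const s).exp.const_mul (cutoff (s / R))).congr_deriv
    (by rw [weight]; simp; ring)

lemma deriv_weight : deriv (weight R h) = fun s =>
    deriv cutoff (s / R) / R * Real.exp (-h * s) - h * weight R h s := by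
  funext s
  have hcut : HasDerivAt (fun s => cutoff (s / R)) (deriv cutoff (s / R) * (1 / R)) s :=
    ((contDiff_cutoff (n := 1)).differentiable one_ne_zero _).hasDerivAt.comp s
      ((hasDerivAt_id s).div_const R)
  have hexp : HasDerivAt (fun s => Real.exp (-h * s)) (Real.exp (-h * s) * (-h * 1)) s :=
    ((hasDerivAt_id s).const_mul (-h)).exp
  have hmul : HasDerivAt (weight R h) _ s := hcut.mul hexp
  rw [hmul.deriv, weight]
  ring

lemma deriv_deriv_weight : deriv (deriv (weight R h)) s =
    (deriv (deriv cutoff) (s / R) / R ^ 2 - 2 * h * (deriv cutoff (s / R) / R)) * Real.exp (-h * s)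
      + h ^ 2 * weight R h s := by
  have hcut : HasDerivAt (fun s => deriv cutoff (s / R) / R)
      (deriv (deriv cutoff) (s / R) * (1 / R) / R) s :=
    (HasDerivAt.comp (h₂ := deriv cutoff) s
      ((contDiff_succ_iff_deriv.1 (contDiff_cutoff (n := 2))).2.2.differentiable
        one_ne_zero _).hasDerivAt ((hasDerivAt_id s).div_const R)).div_const R
  have hexp : HasDerivAt (fun s => Real.exp (-h * s)) (Real.exp (-h * s) * (-h * 1)) s :=
    ((hasDerivAt_id s).const_mul (-h)).exp
  have hweight : HasDerivAt (weight R h) (deriv (weight R h) s) s :=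
    ((contDiff_weight (n := 1)).differentiable one_ne_zero s).hasDerivAt
  rw [deriv_weight, ((hcut.fun_mul hexp).fun_sub (hweight.const_mul h)).deriv, deriv_weight]
  ring

lemma deriv_weight_nonpos (hR : 0 ≤ R) (hh : 0 ≤ h) : deriv (weight R h) s ≤ 0 := by
  rw [deriv_weight, sub_nonpos]
  calc deriv cutoff (s / R) / R * Real.exp (-h * s)
      ≤ 0 := mul_nonpos_of_nonpos_of_nonneg
        (div_nonpos_of_nonpos_of_nonneg antitone_cutoff.deriv_nonpos hR) (Real.exp_nonneg _)
    _ ≤ h * weight R h s := mul_nonneg hh weight_nonneg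

lemma exists_deriv_weight_bounds : ∃ c, 0 ≤ c ∧ ∀ R h s, 1 ≤ R → 0 ≤ h →
    -(c / R * Real.exp (-h * s)) ≤ deriv (weight R h) s + h * weight R h s ∧
    deriv (deriv (weight R h)) s - h ^ 2 * weight R h s
      ≤ c / R * (1 + 2 * h) * Real.exp (-h * s) := by
  obtain ⟨c, hc⟩ := exists_abs_deriv_cutoff_le
  have hc₀ : 0 ≤ c := (abs_nonneg _).trans (hc 0).1
  refine ⟨c, hc₀, fun R h s hR hh => ?_⟩
  have hR₀ : 0 < R := one_pos.trans_le hR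
  have hfirst : -(c / R) ≤ deriv cutoff (s / R) / R := by
    rw [← neg_div]
    exact div_le_div_of_nonneg_right (neg_le_of_abs_le (hc _).1) hR₀.le
  have hsecond : deriv (deriv cutoff) (s / R) / R ^ 2 ≤ c / R :=
    div_le_div₀ hc₀ (le_of_abs_le (hc _).2) hR₀ (le_self_pow₀ hR two_ne_zero)
  rw [deriv_deriv_weight, deriv_weight, sub_add_cancel, add_sub_cancel_right, ← neg_mul]
  refine ⟨mul_le_mul_of_nonneg_right hfirst (Real.exp_nonneg _),
    mul_le_mul_of_nonneg_right ?_ (Real.exp_nonneg _)⟩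
  nlinarith [mul_le_mul_of_nonneg_left hfirst hh]

end Weight

/-- `V` is a Lyapunov function, with constant `A`, for the equation
`∂ₜ ρ - σ Δ_G ρ + B · ∇_G ρ + Q ρ = 0` on `(0, T)`: it is proper, and all the terms produced by
moving the equation onto a function of `V` are at most of order `V`. For the homogeneous norm `N`
one takes `V = N ^ 2 + 1`. -/
structure IsLyapunov {d m : ℕ} (X : Fin m → (Fin d → ℝ) → Fin d → ℝ) (σ T : ℝ)
    (B : ℝ → (Fin d → ℝ) → Fin m → ℝ) (Q : ℝ → (Fin d → ℝ) → ℝ) (V : (Fin d → ℝ) → ℝ)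
    (A : ℝ) : Prop where
  contDiff : ContDiff ℝ 2 V
  one_le : ∀ x, 1 ≤ V x
  tendsto_cocompact : Filter.Tendsto V (Filter.cocompact _) Filter.atTop
  hgradSq_le : ∀ x, σ * hgradSq X V x ≤ A * V x
  neg_le_hgen : ∀ t ∈ Ioo 0 T, ∀ x, -(A * V x) ≤ hgen X σ (B t) V x
  hdiv_le : ∀ t ∈ Ioo 0 T, ∀ x, hdiv X (B t) x ≤ A * V x
  neg_le_potential : ∀ t ∈ Ioo 0 T, ∀ x, -(A * V x) ≤ Q t x

section Lyapunov

variable {d m : ℕ} {X : Fin m → (Fin d → ℝ) → Fin d → ℝ} {σ T A : ℝ}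
  {B : ℝ → (Fin d → ℝ) → Fin m → ℝ} {Q : ℝ → (Fin d → ℝ) → ℝ} {V : (Fin d → ℝ) → ℝ}

lemma hgradSq_nonneg (f : (Fin d → ℝ) → ℝ) (x : Fin d → ℝ) : 0 ≤ hgradSq X f x :=
  Finset.sum_nonneg fun _ _ => sq_nonneg _

namespace IsLyapunov

lemma pos (hV : IsLyapunov X σ T B Q V A) (x : Fin d → ℝ) : 0 < V x :=
  one_pos.trans_le (hV.one_le x)

lemma const_nonneg (hV : IsLyapunov X σ T B Q V A) (hσ : 0 ≤ σ) : 0 ≤ A :=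
  nonneg_of_mul_nonneg_left
    ((mul_nonneg hσ (hgradSq_nonneg V 0)).trans (hV.hgradSq_le 0)) (hV.pos 0)

lemma isCompact_sublevel (hV : IsLyapunov X σ T B Q V A) (r : ℝ) : IsCompact {x | V x ≤ r} := by
  obtain ⟨k, hk, hkV⟩ := Filter.mem_cocompact.1 (hV.tendsto_cocompact (Filter.Ioi_mem_atTop r))
  exact hk.of_isClosed_subset (isClosed_le hV.contDiff.continuous continuous_const) fun x hx =>
    by_contra fun hxk => not_lt.2 (mem_ofPred.1 hx) (hkV hxk)

lemma tsupport_weight_comp_subset (hV : IsLyapunov X σ T B Q V A) {R : ℝ} (hR : 0 < R) (h : ℝ) :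
    (tsupport fun x => weight R h (V x)) ⊆ {x | V x ≤ 2 * R} :=
  closure_minimal (fun _ hx => by_contra fun hxR => hx (weight_eq_zero hR (not_le.1 hxR).le))
    (hV.isCompact_sublevel _).isClosed

lemma hasCompactSupport_weight_comp (hV : IsLyapunov X σ T B Q V A) {R : ℝ} (hR : 0 < R) (h : ℝ) :
    HasCompactSupport fun x => weight R h (V x) :=
  (hV.isCompact_sublevel _).of_isClosed_subset (isClosed_tsupport _)
    (hV.tsupport_weight_comp_subset hR h)

lemma contDiff_weight_comp (hV : IsLyapunov X σ T B Q V A) (R h : ℝ) :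
    ContDiff ℝ 2 fun x => weight R h (V x) :=
  (contDiff_weight (n := 2)).comp hV.contDiff

lemma exists_hgen_weight_le (hV : IsLyapunov X σ T B Q V A) (hσ : 0 ≤ σ)
    (hX : ∀ i, ContDiff ℝ 1 (X i)) :
    ∃ c, 0 ≤ c ∧ ∀ R h t x, 1 ≤ R → 0 ≤ h → t ∈ Ioo 0 T →
      hgen X σ (B t) (fun y => weight R h (V y)) x
        ≤ A * V x * ((h + h ^ 2) * weight R h (V x)
          + c / R * (2 + 2 * h) * Real.exp (-h * V x)) := by
  obtain ⟨c, hc, hbound⟩ := exists_deriv_weight_bounds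
  refine ⟨c, hc, fun R h t x hR hh ht => ?_⟩
  have hR₀ : 0 < R := one_pos.trans_le hR
  obtain ⟨hfirst, hsecond⟩ := hbound R h (V x) hR hh
  rw [hgen_comp hX contDiff_weight hV.contDiff]
  set e := c / R * Real.exp (-h * V x)
  have he : 0 ≤ e := mul_nonneg (div_nonneg hc hR₀.le) (Real.exp_nonneg _)
  have hw : 0 ≤ weight R h (V x) := weight_nonneg
  have hAV : 0 ≤ A * V x := mul_nonneg (hV.const_nonneg hσ) (hV.pos x).le
  have hdrift : deriv (weight R h) (V x) * hgen X σ (B t) V x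
      ≤ A * V x * (h * weight R h (V x) + e) := by
    nlinarith [mul_le_mul_of_nonpos_left (hV.neg_le_hgen t ht x)
      (deriv_weight_nonpos (s := V x) hR₀.le hh), mul_le_mul_of_nonneg_left hfirst hAV]
  have hdiffusion : σ * deriv (deriv (weight R h)) (V x) * hgradSq X V x
      ≤ A * V x * (h ^ 2 * weight R h (V x) + (1 + 2 * h) * e) := by
    calc σ * deriv (deriv (weight R h)) (V x) * hgradSq X V x
        = σ * hgradSq X V x * deriv (deriv (weight R h)) (V x) := by ring
      _ ≤ σ * hgradSq X V x * (h ^ 2 * weight R h (V x) + (1 + 2 * h) * e) :=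
          mul_le_mul_of_nonneg_left (by simp only [e]; linarith)
            (mul_nonneg hσ (hgradSq_nonneg V x))
      _ ≤ _ := mul_le_mul_of_nonneg_right (hV.hgradSq_le x)
          (add_nonneg (mul_nonneg (sq_nonneg h) hw) (mul_nonneg (by positivity) he))
  calc _ ≤ A * V x * (h * weight R h (V x) + e)
        + A * V x * (h ^ 2 * weight R h (V x) + (1 + 2 * h) * e) := add_le_add hdrift hdiffusion
    _ = _ := by simp only [e]; ring

lemma exists_adjoint_weight_le (hV : IsLyapunov X σ T B Q V A) (hσ : 0 ≤ σ)
    (hX : ∀ i, ContDiff ℝ 1 (X i)) {β : ℝ} (hβ : 0 ≤ β) :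
    ∃ K c, 0 < K ∧ 0 ≤ c ∧ ∀ R h t x, 1 ≤ R → h ∈ Icc (β + 1) (β + 2) → t ∈ Ioo 0 T →
      hgen X σ (B t) (fun y => weight R h (V y)) x
        + (hdiv X (B t) x + 2 * (A * V x) - K * V x) * weight R h (V x)
      ≤ c / R * Real.exp (-β * V x) := by
  obtain ⟨c, hc, hgen_le⟩ := hV.exists_hgen_weight_le hσ hX
  have hA : 0 ≤ A := hV.const_nonneg hσ
  refine ⟨A * (β + 2 + (β + 2) ^ 2 + 3) + 1, A * c * (2 + 2 * (β + 2)), by positivity,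
    by positivity, fun R h t x hR hh ht => ?_⟩
  have hh₀ : 0 ≤ h := by linarith [hh.1]
  have hV₀ : 0 < V x := hV.pos x
  have hw : 0 ≤ weight R h (V x) := weight_nonneg
  have habsorb : (h + h ^ 2) * A + 3 * A ≤ A * (β + 2 + (β + 2) ^ 2 + 3) + 1 := by
    nlinarith [mul_le_mul_of_nonneg_left hh.2 hA,
      mul_le_mul_of_nonneg_left (pow_le_pow_left₀ hh₀ hh.2 2) hA]
  have hdecay : V x * Real.exp (-h * V x) ≤ Real.exp (-β * V x) := by
    calc V x * Real.exp (-h * V x)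
        ≤ Real.exp (V x) * Real.exp (-h * V x) := by
          gcongr
          linarith [Real.add_one_le_exp (V x)]
      _ ≤ Real.exp (-β * V x) := by
          rw [← Real.exp_add, Real.exp_le_exp]
          nlinarith [hh.1]
  calc _ ≤ A * V x * ((h + h ^ 2) * weight R h (V x) + c / R * (2 + 2 * h) * Real.exp (-h * V x))
        + (A * V x + 2 * (A * V x) - (A * (β + 2 + (β + 2) ^ 2 + 3) + 1) * V x)
          * weight R h (V x) := by
        gcongr
        exacts [hgen_le R h t x hR hh₀ ht, hV.hdiv_le t ht x]
    _ ≤ A * V x * (c / R * (2 + 2 * h) * Real.exp (-h * V x)) := by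
        nlinarith [mul_le_mul_of_nonneg_right habsorb (mul_nonneg hV₀.le hw)]
    _ = A * c * (2 + 2 * h) / R * (V x * Real.exp (-h * V x)) := by ring
    _ ≤ A * c * (2 + 2 * (β + 2)) / R * Real.exp (-β * V x) := by
        gcongr
        exact hh.2

end IsLyapunov

end Lyapunov

section Kato

variable {d m : ℕ} {X : Fin m → (Fin d → ℝ) → Fin d → ℝ} {σ : ℝ}
  {b : (Fin d → ℝ) → Fin m → ℝ} {v ψ p q k : (Fin d → ℝ) → ℝ}

lemma deriv_softAbs_mul_hgen_sub_le (hσ : 0 ≤ σ) (hX : ∀ i, ContDiff ℝ 1 (X i))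
    (hv : ContDiff ℝ 2 v) {x : Fin d → ℝ} (hp : 0 ≤ p x) (hpq : -p x ≤ q x) :
    deriv softAbs (v x) * (hgen X σ b v x - q x * v x)
      ≤ hgen X σ b (fun y => softAbs (v y)) x + 2 * p x * softAbs (v x) := by
  rw [hgen_comp hX contDiff_softAbs hv]
  have hconvex : 0 ≤ σ * deriv (deriv softAbs) (v x) * hgradSq X v x :=
    mul_nonneg (mul_nonneg hσ (deriv_deriv_softAbs_nonneg _)) (hgradSq_nonneg v x)
  nlinarith [mul_le_mul_of_nonneg_right hpq (mul_deriv_softAbs_nonneg (v x)),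
    mul_le_mul_of_nonneg_left (mul_deriv_softAbs_le (v x)) hp]

-- Kato's inequality, tested against `ψ`.
lemma integral_deriv_softAbs_mul_le (hσ : 0 ≤ σ) (hX : ∀ i, ContDiff ℝ 1 (X i))
    (hX_div : ∀ i x, ediv (X i) x = 0) (hb : ∀ i, ContDiff ℝ 1 fun x => b x i)
    (hv : ContDiff ℝ 2 v) (hψ : ContDiff ℝ 2 ψ) (hψ_supp : HasCompactSupport ψ)
    (hψ_nonneg : ∀ x, 0 ≤ ψ x) (hp : Continuous p) (hp_nonneg : ∀ x, 0 ≤ p x)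
    (hpq : ∀ x, -p x ≤ q x) (hk : Continuous k)
    (hz : Continuous fun x => hgen X σ (-b) v x - q x * v x) :
    ∫ x, (deriv softAbs (v x) * (hgen X σ (-b) v x - q x * v x) - k x * softAbs (v x)) * ψ x
      ≤ ∫ x, softAbs (v x) * (hgen X σ b ψ x + (hdiv X b x + 2 * p x - k x) * ψ x) := by
  have hw : ContDiff ℝ 2 fun x => softAbs (v x) := contDiff_softAbs.comp hv
  have hL : Continuous (hgen X σ (-b) fun x => softAbs (v x)) :=
    continuous_hgen hX (fun i => (hb i).continuous.neg) hw
  have hzero : Continuous fun x => (2 * p x - k x) * softAbs (v x) :=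
    ((continuous_const.mul hp).sub hk).mul hw.continuous
  calc ∫ x, (deriv softAbs (v x) * (hgen X σ (-b) v x - q x * v x) - k x * softAbs (v x)) * ψ x
      ≤ ∫ x, (hgen X σ (-b) (fun y => softAbs (v y)) x
          + (2 * p x - k x) * softAbs (v x)) * ψ x := by
        refine integral_mono ?_ ?_ fun x => mul_le_mul_of_nonneg_right ?_ (hψ_nonneg x)
        · have hderiv : Continuous fun x => deriv softAbs (v x) :=
            (contDiff_softAbs.continuous_deriv le_rfl).comp hv.continuous
          exact (((hderiv.mul hz).sub (hk.mul hw.continuous)).mul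
            hψ.continuous).integrable_of_hasCompactSupport hψ_supp.mul_left
        · exact ((hL.add hzero).mul hψ.continuous).integrable_of_hasCompactSupport
            hψ_supp.mul_left
        · linarith [deriv_softAbs_mul_hgen_sub_le (b := -b) hσ hX hv (hp_nonneg x) (hpq x)]
    _ = (∫ x, ψ x * hgen X σ (-b) (fun y => softAbs (v y)) x)
          + ∫ x, (2 * p x - k x) * softAbs (v x) * ψ x := by
        rw [← integral_add]
        · congr 1 with x; ring
        · exact (hψ.continuous.mul hL).integrable_of_hasCompactSupport hψ_supp.mul_right
        · exact (hzero.mul hψ.continuous).integrable_of_hasCompactSupport hψ_supp.mul_left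
    _ = (∫ x, softAbs (v x) * (hgen X σ b ψ x + hdiv X b x * ψ x))
          + ∫ x, (2 * p x - k x) * softAbs (v x) * ψ x := by
        rw [integral_mul_hgen hX hX_div hb hw hψ hψ_supp]
    _ = _ := by
        rw [← integral_add]
        · congr 1 with x; ring
        · exact (hw.continuous.mul
            ((continuous_hgen hX (fun i => (hb i).continuous) hψ).add
              ((continuous_hdiv (fun i => (hX i).continuous) hb).mul
                hψ.continuous))).integrable_of_hasCompactSupport
            (((hψ_supp.mono' support_hgen_subset).add hψ_supp.mul_left).mul_left)
        · exact (hzero.mul hψ.continuous).integrable_of_hasCompactSupport hψ_supp.mul_left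

end Kato

section ParametricIntegral

variable {α : Type*} [TopologicalSpace α] [T2Space α] [MeasurableSpace α] [BorelSpace α]
  {μ : Measure α} [IsFiniteMeasureOnCompacts μ]

lemma hasDerivAt_integral_of_forall_notMem_eq_zero {I : Set ℝ} (hI : IsOpen I) {k : Set α}
    (hk : IsCompact k) {G G' : ℝ → α → ℝ} (hG : ∀ t ∈ I, Continuous (G t))
    (hG' : ContinuousOn (fun p : ℝ × α => G' p.1 p.2) (I ×ˢ univ))
    (hGG' : ∀ t ∈ I, ∀ x, HasDerivAt (fun s => G s x) (G' t x) t)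
    (hG_zero : ∀ t ∈ I, ∀ x ∉ k, G t x = 0) {t : ℝ} (ht : t ∈ I) :
    HasDerivAt (fun t => ∫ x, G t x ∂μ) (∫ x, G' t x ∂μ) t := by
  obtain ⟨δ, hδ, hδI⟩ := Metric.nhds_basis_closedBall.mem_iff.1 (hI.mem_nhds ht)
  obtain ⟨M, hM⟩ := ((isCompact_closedBall t δ).prod hk).exists_bound_of_continuousOn
    (hG'.mono (prod_mono hδI (subset_univ _)))
  have hG'_zero {s : ℝ} (hs : s ∈ I) {x : α} (hx : x ∉ k) : G' s x = 0 := by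
    refine (hGG' s hs x).unique ((hasDerivAt_const s 0).congr_of_eventuallyEq ?_)
    filter_upwards [hI.mem_nhds hs] with r hr using hG_zero r hr x hx
  refine (hasDerivAt_integral_of_dominated_loc_of_deriv_le (bound := k.indicator fun _ => M)
    (Metric.closedBall_mem_nhds t hδ) ?_ ?_ ?_ (.of_forall fun x s hs => ?_) ?_
    (.of_forall fun x s hs => hGG' s (hδI hs) x)).2
  · filter_upwards [hI.mem_nhds ht] with s hs using (hG s hs).aestronglyMeasurable
  · exact (hG t ht).integrable_of_hasCompactSupport (.intro hk (hG_zero t ht))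
  · exact (hG'.comp_continuous (Continuous.prodMk_right t)
      fun x => ⟨ht, mem_univ x⟩).aestronglyMeasurable
  · by_cases hx : x ∈ k
    · simpa [hx] using hM (s, x) ⟨hs, hx⟩
    · simp [hx, hG'_zero (hδI hs) hx]
  · exact (integrable_indicator_iff hk.measurableSet).2 (integrableOn_const hk.measure_lt_top.ne)

end ParametricIntegral

/-- A classical solution of `∂ₜ u - σ Δ_G u + B · ∇_G u + Q u = 0` on `(0, T) × ℝ^d`, continuous up
to the times `0` and `T`. -/
structure IsClassicalSolution {d m : ℕ} (X : Fin m → (Fin d → ℝ) → Fin d → ℝ) (σ T : ℝ)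
    (B : ℝ → (Fin d → ℝ) → Fin m → ℝ) (Q : ℝ → (Fin d → ℝ) → ℝ) (u : ℝ → (Fin d → ℝ) → ℝ) :
    Prop where
  continuousOn : ContinuousOn (fun p : ℝ × (Fin d → ℝ) => u p.1 p.2) (Icc 0 T ×ˢ univ)
  differentiableAt_time : ∀ x, ∀ t ∈ Ioo 0 T, DifferentiableAt ℝ (fun s => u s x) t
  contDiff : ∀ t ∈ Ioo 0 T, ContDiff ℝ 2 (u t)
  continuousOn_deriv_time :
    ContinuousOn (fun p : ℝ × (Fin d → ℝ) => deriv (fun s => u s p.2) p.1) (Ioo 0 T ×ˢ univ)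
  equation : ∀ t ∈ Ioo 0 T, ∀ x, deriv (fun s => u s x) t - σ * hLap X (u t) x
    + (∑ i, B t x i * vderiv (X i) (u t) x) + Q t x * u t x = 0

/-- `u` is integrable on `(0, T) × ℝ^d` against the weight `exp (-β * V)`. -/
def IsExpIntegrable {d : ℕ} (T : ℝ) (V : (Fin d → ℝ) → ℝ) (β : ℝ) (u : ℝ → (Fin d → ℝ) → ℝ) :
    Prop :=
  IntegrableOn (fun p : ℝ × (Fin d → ℝ) => |u p.1 p.2| * Real.exp (-β * V p.2)) (Ioc 0 T ×ˢ univ)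

section ClassicalSolution

variable {d m : ℕ} {X : Fin m → (Fin d → ℝ) → Fin d → ℝ} {σ T : ℝ}
  {B : ℝ → (Fin d → ℝ) → Fin m → ℝ} {Q : ℝ → (Fin d → ℝ) → ℝ}
  {u v : ℝ → (Fin d → ℝ) → ℝ} {t : ℝ}

namespace IsClassicalSolution

lemma continuous_slice (hu : IsClassicalSolution X σ T B Q u) (ht : t ∈ Icc 0 T) :
    Continuous (u t) :=
  hu.continuousOn.comp_continuous (Continuous.prodMk_right t) fun x => ⟨ht, mem_univ x⟩

lemma continuous_deriv_time_slice (hu : IsClassicalSolution X σ T B Q u) (ht : t ∈ Ioo 0 T) :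
    Continuous fun x => deriv (fun s => u s x) t :=
  hu.continuousOn_deriv_time.comp_continuous (Continuous.prodMk_right t) fun x => ⟨ht, mem_univ x⟩

lemma deriv_time_eq (hu : IsClassicalSolution X σ T B Q u) (ht : t ∈ Ioo 0 T) (x : Fin d → ℝ) :
    deriv (fun s => u s x) t = hgen X σ (-B t) (u t) x - Q t x * u t x := by
  simp only [hgen, Pi.neg_apply, neg_mul, Finset.sum_neg_distrib]
  linarith [hu.equation t ht x]

lemma sub (hX : ∀ i, ContDiff ℝ 1 (X i)) (hu : IsClassicalSolution X σ T B Q u)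
    (hv : IsClassicalSolution X σ T B Q v) :
    IsClassicalSolution X σ T B Q fun t x => u t x - v t x := by
  have hderiv (x : Fin d → ℝ) {t : ℝ} (ht : t ∈ Ioo 0 T) :
      deriv (fun s => u s x - v s x) t = deriv (fun s => u s x) t - deriv (fun s => v s x) t :=
    deriv_fun_sub (hu.differentiableAt_time x t ht) (hv.differentiableAt_time x t ht)
  refine ⟨hu.continuousOn.sub hv.continuousOn,
    fun x t ht => (hu.differentiableAt_time x t ht).sub (hv.differentiableAt_time x t ht),
    fun t ht => (hu.contDiff t ht).sub (hv.contDiff t ht),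
    (hu.continuousOn_deriv_time.sub hv.continuousOn_deriv_time).congr fun p hp => hderiv p.2 hp.1,
    fun t ht x => ?_⟩
  have hgen_eq := hgen_sub (σ := σ) (b := -B t) hX (hu.contDiff t ht) (hv.contDiff t ht) x
  rw [hderiv x ht, hu.deriv_time_eq ht, hv.deriv_time_eq ht]
  simp only [hgen, Pi.neg_apply, neg_mul, Finset.sum_neg_distrib] at hgen_eq ⊢
  linarith

end IsClassicalSolution

lemma IsExpIntegrable.sub {V : (Fin d → ℝ) → ℝ} {α β γ : ℝ} (hV : Continuous V)
    (hV_nonneg : ∀ x, 0 ≤ V x) (hαγ : α ≤ γ) (hβγ : β ≤ γ)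
    (hu : ContinuousOn (fun p : ℝ × (Fin d → ℝ) => u p.1 p.2) (Icc 0 T ×ˢ univ))
    (hv : ContinuousOn (fun p : ℝ × (Fin d → ℝ) => v p.1 p.2) (Icc 0 T ×ˢ univ))
    (hu_int : IsExpIntegrable T V α u) (hv_int : IsExpIntegrable T V β v) :
    IsExpIntegrable T V γ fun t x => u t x - v t x := by
  have hexp {η : ℝ} (hη : η ≤ γ) (x : Fin d → ℝ) :
      Real.exp (-γ * V x) ≤ Real.exp (-η * V x) :=
    Real.exp_le_exp.2 (mul_le_mul_of_nonneg_right (neg_le_neg hη) (hV_nonneg x))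
  refine (Integrable.add hu_int hv_int).mono' ?_ (.of_forall fun p => ?_)
  · have hcont : ContinuousOn (fun p : ℝ × (Fin d → ℝ) => u p.1 p.2 - v p.1 p.2)
        (Ioc 0 T ×ˢ univ) :=
      (hu.sub hv).mono (prod_mono_left Ioc_subset_Icc_self)
    refine (hcont.abs.mul (Continuous.continuousOn ?_)).aestronglyMeasurable
      (measurableSet_Ioc.prod .univ)
    fun_prop
  · rw [Real.norm_of_nonneg (mul_nonneg (abs_nonneg _) (Real.exp_nonneg _))]
    calc |u p.1 p.2 - v p.1 p.2| * Real.exp (-γ * V p.2)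
        ≤ (|u p.1 p.2| + |v p.1 p.2|) * Real.exp (-γ * V p.2) :=
          mul_le_mul_of_nonneg_right (abs_sub _ _) (Real.exp_nonneg _)
      _ ≤ |u p.1 p.2| * Real.exp (-α * V p.2) + |v p.1 p.2| * Real.exp (-β * V p.2) := by
          rw [add_mul]
          exact add_le_add (mul_le_mul_of_nonneg_left (hexp hαγ _) (abs_nonneg _))
            (mul_le_mul_of_nonneg_left (hexp hβγ _) (abs_nonneg _))

end ClassicalSolution

/-- The weighted `L¹` energy of `u` at time `t`; the exponential rate `θ + K * t` of the weight
grows in time. -/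
def energy {d : ℕ} (V : (Fin d → ℝ) → ℝ) (u : ℝ → (Fin d → ℝ) → ℝ) (R θ K t : ℝ) : ℝ :=
  ∫ x, softAbs (u t x) * weight R (θ + K * t) (V x)

section Energy

variable {d m : ℕ} {X : Fin m → (Fin d → ℝ) → Fin d → ℝ} {σ T A β R θ K : ℝ}
  {B : ℝ → (Fin d → ℝ) → Fin m → ℝ} {Q : ℝ → (Fin d → ℝ) → ℝ} {V : (Fin d → ℝ) → ℝ}
  {u : ℝ → (Fin d → ℝ) → ℝ} {t : ℝ}

lemma continuous_weight_rate (hV : Continuous V) :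
    Continuous fun p : ℝ × (Fin d → ℝ) => weight R (θ + K * p.1) (V p.2) := by
  have hcut : Continuous cutoff := (contDiff_cutoff (n := 0)).continuous
  unfold weight
  fun_prop

lemma continuousOn_energy (hV : IsLyapunov X σ T B Q V A)
    (hu : ContinuousOn (fun p : ℝ × (Fin d → ℝ) => u p.1 p.2) (Icc 0 T ×ˢ univ)) (hR : 0 < R) :
    ContinuousOn (energy V u R θ K) (Icc 0 T) := by
  refine continuousOn_integral_of_compact_support (hV.isCompact_sublevel (2 * R))
    ((continuous_softAbs.comp_continuousOn hu).mul
      (continuous_weight_rate hV.contDiff.continuous).continuousOn) fun t x _ hx => ?_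
  rw [weight_eq_zero hR (not_le.1 hx).le, mul_zero]

lemma hasDerivAt_energy (hV : IsLyapunov X σ T B Q V A) (hu : IsClassicalSolution X σ T B Q u)
    (hR : 0 < R) (ht : t ∈ Ioo 0 T) :
    HasDerivAt (energy V u R θ K)
      (∫ x, (deriv softAbs (u t x) * deriv (fun s => u s x) t - K * V x * softAbs (u t x))
        * weight R (θ + K * t) (V x)) t := by
  have hV_cont : Continuous V := hV.contDiff.continuous
  have hIoo : Ioo 0 T ×ˢ univ ⊆ Icc 0 T ×ˢ (univ : Set (Fin d → ℝ)) :=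
    prod_mono_left Ioo_subset_Icc_self
  refine hasDerivAt_integral_of_forall_notMem_eq_zero (μ := volume)
    (G := fun t x => softAbs (u t x) * weight R (θ + K * t) (V x)) (G' := fun t x =>
      (deriv softAbs (u t x) * deriv (fun s => u s x) t - K * V x * softAbs (u t x))
        * weight R (θ + K * t) (V x))
    isOpen_Ioo (hV.isCompact_sublevel (2 * R)) (fun s hs => ?_) ?_ (fun s hs x => ?_)
    (fun s _ x hx => ?_) ht
  · exact (continuous_softAbs.comp
      (hu.continuous_slice (Ioo_subset_Icc_self hs))).mul (hV.contDiff_weight_comp _ _).continuous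
  · have hderiv : Continuous (deriv softAbs) := contDiff_softAbs.continuous_deriv le_rfl
    refine (((hderiv.comp_continuousOn (hu.continuousOn.mono hIoo)).mul
      hu.continuousOn_deriv_time).sub (ContinuousOn.mul (Continuous.continuousOn ?_)
        (continuous_softAbs.comp_continuousOn (hu.continuousOn.mono hIoo)))).mul
      (continuous_weight_rate hV_cont).continuousOn
    fun_prop
  · have hsoft : HasDerivAt (fun s => softAbs (u s x))
        (deriv softAbs (u s x) * deriv (fun s => u s x) s) s :=
      ((contDiff_softAbs (n := 1)).differentiable one_ne_zero _).hasDerivAt.comp s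
        (hu.differentiableAt_time x s hs).hasDerivAt
    have hrate : HasDerivAt (fun s => weight R (θ + K * s) (V x))
        (-(V x * weight R (θ + K * s) (V x)) * (K * 1)) s :=
      (hasDerivAt_weight_rate R (V x) _).comp s (((hasDerivAt_id s).const_mul K).const_add θ)
    exact (hsoft.mul hrate).congr_deriv (by ring)
  · rw [weight_eq_zero hR (not_le.1 hx).le, mul_zero]

lemma exists_integral_adjoint_weight_le (hV : IsLyapunov X σ T B Q V A) (hσ : 0 ≤ σ)
    (hX : ∀ i, ContDiff ℝ 1 (X i)) (hB : ∀ t ∈ Ioo 0 T, ∀ i, ContDiff ℝ 1 fun x => B t x i)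
    (hβ : 0 ≤ β) :
    ∃ K c, 0 < K ∧ 0 ≤ c ∧ ∀ R h t (w : (Fin d → ℝ) → ℝ), 1 ≤ R → h ∈ Icc (β + 1) (β + 2) →
      t ∈ Ioo 0 T → Continuous w →
      ∫ x, softAbs (w x) * (hgen X σ (B t) (fun y => weight R h (V y)) x
          + (hdiv X (B t) x + 2 * (A * V x) - K * V x) * weight R h (V x))
        ≤ c / R * ∫ x in {x | V x ≤ 2 * R}, |w x| * Real.exp (-β * V x) := by
  obtain ⟨K, c, hK, hc, hadjoint⟩ := hV.exists_adjoint_weight_le hσ hX hβ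
  refine ⟨K, c, hK, hc, fun R h t w hR hh ht hw => ?_⟩
  have hR₀ : 0 < R := one_pos.trans_le hR
  have hV_cont : Continuous V := hV.contDiff.continuous
  have hψ : ContDiff ℝ 2 fun x => weight R h (V x) := hV.contDiff_weight_comp R h
  have hψ_cont := hψ.continuous
  have hdiv_cont : Continuous (hdiv X (B t)) :=
    continuous_hdiv (fun i => (hX i).continuous) (hB t ht)
  have hgen_cont : Continuous (hgen X σ (B t) fun y => weight R h (V y)) :=
    continuous_hgen hX (fun i => (hB t ht i).continuous) hψ
  have hsoft : Continuous softAbs := continuous_softAbs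
  have hk : IsCompact {x | V x ≤ 2 * R} := hV.isCompact_sublevel _
  calc _ = ∫ x in {x | V x ≤ 2 * R}, softAbs (w x) *
          (hgen X σ (B t) (fun y => weight R h (V y)) x
            + (hdiv X (B t) x + 2 * (A * V x) - K * V x) * weight R h (V x)) := by
        refine (setIntegral_eq_integral_of_forall_compl_eq_zero fun x hx => ?_).symm
        rw [weight_eq_zero hR₀ (not_le.1 hx).le, Function.notMem_support.1 fun hgen_mem =>
          hx (hV.tsupport_weight_comp_subset hR₀ h (support_hgen_subset hgen_mem)), mul_zero,
          add_zero, mul_zero]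
    _ ≤ ∫ x in {x | V x ≤ 2 * R}, c / R * (|w x| * Real.exp (-β * V x)) := by
        refine setIntegral_mono (ContinuousOn.integrableOn_compact hk ?_)
          (ContinuousOn.integrableOn_compact hk ?_) fun x => ?_
        · fun_prop
        · fun_prop
        · calc _ ≤ softAbs (w x) * (c / R * Real.exp (-β * V x)) :=
                mul_le_mul_of_nonneg_left (hadjoint R h t x hR hh ht) (softAbs_nonneg _)
            _ ≤ |w x| * (c / R * Real.exp (-β * V x)) :=
                mul_le_mul_of_nonneg_right (softAbs_le_abs _) (by positivity)
            _ = _ := mul_left_comm _ _ _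
    _ = _ := integral_const_mul _ _

lemma exists_deriv_energy_le (hV : IsLyapunov X σ T B Q V A) (hσ : 0 ≤ σ)
    (hX : ∀ i, ContDiff ℝ 1 (X i)) (hX_div : ∀ i x, ediv (X i) x = 0)
    (hB : ∀ t ∈ Ioo 0 T, ∀ i, ContDiff ℝ 1 fun x => B t x i)
    (hu : IsClassicalSolution X σ T B Q u) (hβ : 0 ≤ β) :
    ∃ K c, 0 < K ∧ 0 ≤ c ∧ ∀ R h t, 1 ≤ R → h ∈ Icc (β + 1) (β + 2) → t ∈ Ioo 0 T →
      ∫ x, (deriv softAbs (u t x) * deriv (fun s => u s x) t - K * V x * softAbs (u t x))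
          * weight R h (V x)
        ≤ c / R * ∫ x in {x | V x ≤ 2 * R}, |u t x| * Real.exp (-β * V x) := by
  obtain ⟨K, c, hK, hc, hadjoint⟩ := exists_integral_adjoint_weight_le hV hσ hX hB hβ
  refine ⟨K, c, hK, hc, fun R h t hR hh ht => ?_⟩
  have hV_cont : Continuous V := hV.contDiff.continuous
  have hdt_cont := hu.continuous_deriv_time_slice ht
  simp only [hu.deriv_time_eq ht] at hdt_cont ⊢
  exact (integral_deriv_softAbs_mul_le hσ hX hX_div (hB t ht) (hu.contDiff t ht)
    (hV.contDiff_weight_comp R h) (hV.hasCompactSupport_weight_comp (one_pos.trans_le hR) h)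
    (fun _ => weight_nonneg) (continuous_const.mul hV_cont)
    (fun x => mul_nonneg (hV.const_nonneg hσ) (hV.pos x).le) (hV.neg_le_potential t ht)
    (continuous_const.mul hV_cont) hdt_cont).trans
    (hadjoint R h t (u t) hR hh ht (hu.continuous_slice (Ioo_subset_Icc_self ht)))

lemma exists_energy_le (hV : IsLyapunov X σ T B Q V A) (hσ : 0 ≤ σ)
    (hX : ∀ i, ContDiff ℝ 1 (X i)) (hX_div : ∀ i x, ediv (X i) x = 0)
    (hB : ∀ t ∈ Ioo 0 T, ∀ i, ContDiff ℝ 1 fun x => B t x i)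
    (hu : IsClassicalSolution X σ T B Q u) (hβ : 0 ≤ β) (hu_int : IsExpIntegrable T V β u) :
    ∃ K c, 0 < K ∧ ∀ a b R, 0 ≤ a → a ≤ b → b ≤ T → K * (b - a) ≤ 1 → 1 ≤ R →
      (∀ x, u a x = 0) → energy V u R (β + 1 - K * a) K b ≤ c / R := by
  obtain ⟨K, c, hK, hc, hderiv⟩ := exists_deriv_energy_le hV hσ hX hX_div hB hu hβ
  set f : ℝ × (Fin d → ℝ) → ℝ := fun p => |u p.1 p.2| * Real.exp (-β * V p.2)
  refine ⟨K, c * ∫ p in Ioc 0 T ×ˢ univ, f p, hK, fun a b R ha hab hbT hba hR hua => ?_⟩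
  have hR₀ : 0 < R := one_pos.trans_le hR
  set k : Set (Fin d → ℝ) := {x | V x ≤ 2 * R}
  have hsub : Ioc a b ×ˢ k ⊆ Ioc 0 T ×ˢ univ :=
    prod_mono (Ioc_subset_Ioc ha hbT) (subset_univ _)
  have hf : IntegrableOn f (Ioc a b ×ˢ k) (volume.prod volume) := hu_int.mono_set hsub
  have hslice : IntegrableOn (fun t => c / R * ∫ x in k, f (t, x)) (Icc a b) := by
    rw [integrableOn_Icc_iff_integrableOn_Ioc]
    rw [IntegrableOn, ← Measure.prod_restrict] at hf
    exact hf.integral_prod_left.const_mul _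
  have hinit : energy V u R (β + 1 - K * a) K a = 0 := by simp [energy, hua, softAbs]
  have hgrowth : energy V u R (β + 1 - K * a) K b - energy V u R (β + 1 - K * a) K a
      ≤ ∫ t in a..b, c / R * ∫ x in k, f (t, x) := by
    refine intervalIntegral.sub_le_integral_of_hasDeriv_right_of_le hab
      ((continuousOn_energy hV hu.continuousOn hR₀).mono (Icc_subset_Icc ha hbT)) (fun t ht =>
        (hasDerivAt_energy hV hu hR₀ (Ioo_subset_Ioo ha hbT ht)).hasDerivWithinAt) hslice
      fun t ht => hderiv R _ t hR ⟨?_, ?_⟩ (Ioo_subset_Ioo ha hbT ht)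
    · nlinarith [ht.1]
    · nlinarith [ht.2]
  calc energy V u R (β + 1 - K * a) K b ≤ ∫ t in a..b, c / R * ∫ x in k, f (t, x) := by
        simpa [hinit] using hgrowth
    _ = c / R * ∫ p in Ioc a b ×ˢ k, f p := by
        rw [intervalIntegral.integral_of_le hab, integral_const_mul]
        exact congrArg _ (setIntegral_prod f hf).symm
    _ ≤ c / R * ∫ p in Ioc 0 T ×ˢ univ, f p := by
        refine mul_le_mul_of_nonneg_left (setIntegral_mono_set hu_int (.of_forall fun p => ?_)
          hsub.eventuallyLE) (by positivity)
        exact mul_nonneg (abs_nonneg _) (Real.exp_nonneg _)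
    _ = _ := by ring

lemma energy_pos (hV : IsLyapunov X σ T B Q V A) (hu : Continuous (u t)) (hR : 0 < R)
    {x : Fin d → ℝ} (hx : V x < 2 * R) (hux : u t x ≠ 0) : 0 < energy V u R θ K t :=
  ((continuous_softAbs.comp hu).mul
    (hV.contDiff_weight_comp R _).continuous).integral_pos_of_hasCompactSupport_nonneg_nonzero
      (hV.hasCompactSupport_weight_comp hR _).mul_left
      (fun _ => mul_nonneg (softAbs_nonneg _) weight_nonneg)
      (mul_ne_zero (softAbs_eq_zero_iff.not.2 hux) (weight_pos hR hx).ne')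

lemma energy_mono (hV : IsLyapunov X σ T B Q V A) (hu : Continuous (u t)) (hR : 0 < R)
    {R' : ℝ} (hRR' : R ≤ R') : energy V u R θ K t ≤ energy V u R' θ K t := by
  have hint {r : ℝ} (hr : 0 < r) :
      Integrable fun x => softAbs (u t x) * weight r (θ + K * t) (V x) :=
    ((continuous_softAbs.comp hu).mul
      (hV.contDiff_weight_comp r _).continuous).integrable_of_hasCompactSupport
        (hV.hasCompactSupport_weight_comp hr _).mul_left
  exact integral_mono (hint hR) (hint (hR.trans_le hRR')) fun x =>
    mul_le_mul_of_nonneg_left (weight_le_weight hR hRR' (hV.pos x).le) (softAbs_nonneg _)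

lemma exists_eq_zero_of_eq_zero (hV : IsLyapunov X σ T B Q V A) (hσ : 0 ≤ σ)
    (hX : ∀ i, ContDiff ℝ 1 (X i)) (hX_div : ∀ i x, ediv (X i) x = 0)
    (hB : ∀ t ∈ Ioo 0 T, ∀ i, ContDiff ℝ 1 fun x => B t x i)
    (hu : IsClassicalSolution X σ T B Q u) (hβ : 0 ≤ β) (hu_int : IsExpIntegrable T V β u) :
    ∃ δ, 0 < δ ∧ ∀ a b, 0 ≤ a → a ≤ b → b ≤ T → b - a ≤ δ →
      (∀ x, u a x = 0) → ∀ x, u b x = 0 := by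
  obtain ⟨K, c, hK, henergy⟩ := exists_energy_le hV hσ hX hX_div hB hu hβ hu_int
  refine ⟨K⁻¹, inv_pos.2 hK, fun a b ha hab hbT hba hua x => ?_⟩
  have hub : Continuous (u b) := hu.continuous_slice ⟨ha.trans hab, hbT⟩
  by_contra hux
  refine (energy_pos (θ := β + 1 - K * a) (K := K) hV hub (hV.pos x)
    (by linarith [hV.pos x]) hux).not_ge ?_
  have hlim : Filter.Tendsto (fun R => c / R) Filter.atTop (nhds 0) :=
    tendsto_const_nhds.div_atTop Filter.tendsto_id
  refine ge_of_tendsto hlim ?_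
  filter_upwards [Filter.eventually_ge_atTop (V x)] with R hR
  exact (energy_mono hV hub (hV.pos x) hR).trans (henergy a b R ha hab hbT
    ((le_inv_mul_iff₀ hK).1 (by rwa [mul_one])) ((hV.one_le x).trans hR) hua)

end Energy

lemma forall_mem_Icc_of_step {P : ℝ → Prop} {T δ : ℝ} (hδ : 0 < δ) (hP : P 0)
    (hstep : ∀ a b, 0 ≤ a → a ≤ b → b ≤ T → b - a ≤ δ → P a → P b) : ∀ t ∈ Icc 0 T, P t := by
  have hnat (n : ℕ) : ∀ t ∈ Icc 0 T, t ≤ n * δ → P t := by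
    induction n with
    | zero =>
      intro t ht htn
      rwa [le_antisymm (by simpa using htn) ht.1]
    | succ n ih =>
      intro t ht htn
      push_cast at htn
      have hprev : max (t - δ) 0 ≤ t := max_le (by linarith) ht.1
      exact hstep _ t (le_max_right _ _) hprev ht.2 (by linarith [le_max_left (t - δ) 0])
        (ih _ ⟨le_max_right _ _, hprev.trans ht.2⟩ (max_le (by linarith) (by positivity)))
  intro t ht
  obtain ⟨n, hn⟩ := exists_nat_ge (t / δ)
  exact hnat n t ht ((div_le_iff₀ hδ).1 hn)

lemma tendsto_cocompact_of_rpow_norm_le {E : Type*} [NormedAddCommGroup E] [ProperSpace E]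
    {N : E → ℝ} {c ε : ℝ} (hc : 0 < c) (hε : 0 < ε) (hN : ∀ x, 1 ≤ ‖x‖ → c * ‖x‖ ^ ε ≤ N x) :
    Filter.Tendsto N (Filter.cocompact E) Filter.atTop := by
  refine Filter.tendsto_atTop_mono' _ ?_
    (((tendsto_rpow_atTop hε).comp (tendsto_norm_cocompact_atTop (E := E))).const_mul_atTop hc)
  filter_upwards [(tendsto_norm_cocompact_atTop (E := E)).eventually_ge_atTop 1] with x hx
  exact hN x hx

section LyapunovOfBounded

variable {d m : ℕ} {X : Fin m → (Fin d → ℝ) → Fin d → ℝ} {σ T : ℝ}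
  {B : ℝ → (Fin d → ℝ) → Fin m → ℝ} {Q : ℝ → (Fin d → ℝ) → ℝ} {S : (Fin d → ℝ) → ℝ}
  {C MB MdivB MQ : ℝ}

lemma abs_hgen_le {b : (Fin d → ℝ) → Fin m → ℝ} {f : (Fin d → ℝ) → ℝ} {x : Fin d → ℝ}
    (hσ : 0 ≤ σ) (hb : ∀ i, |b x i| ≤ MB) :
    |hgen X σ b f x| ≤ σ * |hLap X f x| + |MB| * (m + hgradSq X f x) := by
  have hterm (i : Fin m) : |b x i * vderiv (X i) f x| ≤ |MB| * (1 + vderiv (X i) f x ^ 2) := by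
    rw [abs_mul]
    refine mul_le_mul ((hb i).trans (le_abs_self _)) ?_ (abs_nonneg _) (abs_nonneg _)
    nlinarith [sq_abs (vderiv (X i) f x), sq_nonneg (|vderiv (X i) f x| - 1)]
  calc |hgen X σ b f x| ≤ |σ * hLap X f x| + ∑ i, |b x i * vderiv (X i) f x| :=
        (abs_add_le _ _).trans (by gcongr; exact Finset.abs_sum_le_sum_abs _ _)
    _ ≤ σ * |hLap X f x| + ∑ i, |MB| * (1 + vderiv (X i) f x ^ 2) := by
        rw [abs_mul, abs_of_nonneg hσ]
        gcongr with i
        exact hterm i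
    _ = σ * |hLap X f x| + |MB| * (m + hgradSq X f x) := by
        rw [← Finset.mul_sum, Finset.sum_add_distrib, hgradSq]
        simp

lemma isLyapunov_add_one (hσ : 0 ≤ σ) (hS : ContDiff ℝ 2 S) (hS_nonneg : ∀ x, 0 ≤ S x)
    (hS_tendsto : Filter.Tendsto S (Filter.cocompact _) Filter.atTop)
    (hS_grad : ∀ x, hgradSq X S x ≤ C * S x) (hS_lap : ∀ x, |hLap X S x| ≤ C)
    (hB : ∀ t ∈ Ioo 0 T, ∀ x i, |B t x i| ≤ MB)
    (hB_div : ∀ t ∈ Ioo 0 T, ∀ x, hdiv X (B t) x ≤ MdivB)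
    (hQ : ∀ t ∈ Ioo 0 T, ∀ x, -MQ ≤ Q t x) :
    IsLyapunov X σ T B Q (fun x => S x + 1) (σ * C + |MB| * (m + C) + |MdivB| + |MQ|) := by
  have hC : 0 ≤ C := (abs_nonneg _).trans (hS_lap 0)
  have hσC : 0 ≤ σ * C := mul_nonneg hσ hC
  have hMB : 0 ≤ |MB| * (m + C) := by positivity
  set A := σ * C + |MB| * (m + C) + |MdivB| + |MQ| with hA_def
  have hA : 0 ≤ A := by positivity
  have hle_const {r : ℝ} (hr : r ≤ A) (x : Fin d → ℝ) : r ≤ A * (S x + 1) :=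
    hr.trans (le_mul_of_one_le_right hA (le_add_of_nonneg_left (hS_nonneg x)))
  refine ⟨hS.add contDiff_const, fun x => le_add_of_nonneg_left (hS_nonneg x),
    Filter.tendsto_atTop_add_const_right _ 1 hS_tendsto, fun x => ?_, fun t ht x => ?_,
    fun t ht x => (hB_div t ht x).trans (hle_const ?_ x),
    fun t ht x => (neg_le_neg (hle_const ?_ x)).trans (hQ t ht x)⟩
  · simp only [hgradSq, vderiv_add_const]
    calc σ * hgradSq X S x ≤ σ * C * S x := by
          rw [mul_assoc]
          exact mul_le_mul_of_nonneg_left (hS_grad x) hσ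
      _ ≤ A * (S x + 1) := mul_le_mul (by linarith [abs_nonneg MdivB, abs_nonneg MQ])
          (le_add_of_nonneg_right zero_le_one) (hS_nonneg x) hA
  · simp only [hgen, hLap, vderiv_add_const]
    refine neg_le_of_abs_le ?_
    calc |hgen X σ (B t) S x| ≤ σ * |hLap X S x| + |MB| * (m + hgradSq X S x) :=
          abs_hgen_le hσ (hB t ht x)
      _ ≤ σ * C + |MB| * (m + C * S x) := by
          gcongr
          exacts [hS_lap x, hS_grad x]
      _ ≤ A * (S x + 1) := by
          have hexcess : 0 ≤ σ * C * S x + |MB| * (m * S x + C)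
              + (|MdivB| + |MQ|) * (S x + 1) := by
            have hSx := hS_nonneg x
            positivity
          rw [hA_def]
          linarith
  · linarith [le_abs_self MdivB, abs_nonneg MQ]
  · linarith [le_abs_self MQ, abs_nonneg MdivB]

end LyapunovOfBounded

theorem linear_subelliptic_uniqueness_general {d m : ℕ} {X : Fin m → (Fin d → ℝ) → Fin d → ℝ}
    {σ T A α β : ℝ} {B : ℝ → (Fin d → ℝ) → Fin m → ℝ} {Q : ℝ → (Fin d → ℝ) → ℝ}
    {V : (Fin d → ℝ) → ℝ} {u v : ℝ → (Fin d → ℝ) → ℝ} (hX : ∀ i, ContDiff ℝ 1 (X i))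
    (hX_div : ∀ i x, ediv (X i) x = 0) (hσ : 0 ≤ σ)
    (hB : ∀ t ∈ Ioo 0 T, ∀ i, ContDiff ℝ 1 fun x => B t x i) (hV : IsLyapunov X σ T B Q V A)
    (hu : IsClassicalSolution X σ T B Q u) (hv : IsClassicalSolution X σ T B Q v)
    (hu_int : IsExpIntegrable T V α u) (hv_int : IsExpIntegrable T V β v)
    (huv : ∀ x, u 0 x = v 0 x) : ∀ t ∈ Icc 0 T, ∀ x, u t x = v t x := by
  have hdiff_int : IsExpIntegrable T V (max (max α β) 0) fun t x => u t x - v t x :=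
    .sub hV.contDiff.continuous (fun x => (hV.pos x).le)
      (le_max_of_le_left (le_max_left α β)) (le_max_of_le_left (le_max_right α β))
      hu.continuousOn hv.continuousOn hu_int hv_int
  obtain ⟨δ, hδ, hstep⟩ := exists_eq_zero_of_eq_zero hV hσ hX hX_div hB (hu.sub hX hv)
    (le_max_right _ _) hdiff_int
  have hzero := forall_mem_Icc_of_step (P := fun t => ∀ x, u t x - v t x = 0) hδ
    (fun x => sub_eq_zero.2 (huv x)) hstep
  exact fun t ht x => sub_eq_zero.1 (hzero t ht x)

/-- Uniqueness of bounded-growth classical solutions of the linear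
subelliptic equation `∂_t ρ − σ Δ_G ρ + B·∇_G ρ + Q ρ = 0` with the same initial datum. -/
theorem linear_subelliptic_uniqueness {d m : ℕ} (hd : 0 < d) (hm : 0 < m)
    (X : Fin m → (Fin d → ℝ) → (Fin d → ℝ)) (hXsm : ∀ i, ContDiff ℝ (⊤ : ℕ∞) (X i))
    (hXdivfree : ∀ i x, ediv (X i) x = 0)
    (C₀ : ℝ) (hC₀ : 0 ≤ C₀) (κ : ℕ)
    (hXgrowth : ∀ i (x : Fin d → ℝ), ‖X i x‖ + ‖fderiv ℝ (X i) x‖ ≤ C₀ * (1 + ‖x‖) ^ κ)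
    (σ T : ℝ) (hσ : 0 < σ) (hT : 0 < T)
    (B : ℝ → (Fin d → ℝ) → Fin m → ℝ) (MB : ℝ)
    (hBcont : Continuous (fun p : ℝ × (Fin d → ℝ) => B p.1 p.2))
    (hBbd : ∀ t ∈ Set.Icc (0:ℝ) T, ∀ x i, |B t x i| ≤ MB)
    (hBC1 : ∀ t ∈ Set.Icc (0:ℝ) T, ∀ i, ContDiff ℝ 1 (fun y => B t y i))
    (MdivB : ℝ)
    (hdivBcont : Continuous (fun p : ℝ × (Fin d → ℝ) => hdiv X (B p.1) p.2))
    (hdivBbd : ∀ t ∈ Set.Icc (0:ℝ) T, ∀ x, |hdiv X (B t) x| ≤ MdivB)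
    (Q : ℝ → (Fin d → ℝ) → ℝ) (MQ : ℝ)
    (hQcont : Continuous (fun p : ℝ × (Fin d → ℝ) => Q p.1 p.2))
    (hQbd : ∀ t ∈ Set.Icc (0:ℝ) T, ∀ x, |Q t x| ≤ MQ)
    (N : (Fin d → ℝ) → ℝ) (hNcont : Continuous N) (hNpos : ∀ x, 0 ≤ N x)
    (hNC2 : ContDiff ℝ 2 (fun x => N x ^ 2))
    (C c₀ ε₀ : ℝ) (hC : 0 ≤ C) (hc₀ : 0 < c₀) (hε₀ : 0 < ε₀)
    (hgrad : ∀ x, hgradSq X (fun y => N y ^ 2) x ≤ C * N x ^ 2)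
    (hlap : ∀ x, |hLap X (fun y => N y ^ 2) x| ≤ C)
    (hcoerc : ∀ x : Fin d → ℝ, 1 ≤ ‖x‖ → c₀ * ‖x‖ ^ ε₀ ≤ N x)
    (ρ₀ : (Fin d → ℝ) → ℝ) (ρ : Fin 2 → ℝ → (Fin d → ℝ) → ℝ)
    (hρcont : ∀ j, ContinuousOn (fun p : ℝ × (Fin d → ℝ) => ρ j p.1 p.2)
        (Set.Icc 0 T ×ˢ Set.univ))
    (hρt : ∀ j (x : Fin d → ℝ), ∀ t ∈ Set.Ioo (0:ℝ) T,
        DifferentiableAt ℝ (fun s => ρ j s x) t)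
    (hρx : ∀ j, ∀ t ∈ Set.Ioo (0:ℝ) T, ContDiff ℝ 2 (ρ j t))
    (hρtcont : ∀ j, ContinuousOn
        (fun p : ℝ × (Fin d → ℝ) => deriv (fun s => ρ j s p.2) p.1)
        (Set.Ioo 0 T ×ˢ Set.univ))
    (hρxcont : ∀ j i, ContinuousOn
        (fun p : ℝ × (Fin d → ℝ) => vderiv (X i) (ρ j p.1) p.2)
        (Set.Ioo 0 T ×ˢ Set.univ))
    (hρxxcont : ∀ j i i', ContinuousOn
        (fun p : ℝ × (Fin d → ℝ) => vderiv (X i) (vderiv (X i') (ρ j p.1)) p.2)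
        (Set.Ioo 0 T ×ˢ Set.univ))
    (hPDE : ∀ j, ∀ t ∈ Set.Ioo (0:ℝ) T, ∀ x,
        deriv (fun s => ρ j s x) t - σ * hLap X (ρ j t) x
          + (∑ i, B t x i * vderiv (X i) (ρ j t) x) + Q t x * ρ j t x = 0)
    (hinit : ∀ j x, ρ j 0 x = ρ₀ x)
    (hint : ∀ j, ∃ β : ℝ, 0 < β ∧ MeasureTheory.IntegrableOn
        (fun p : ℝ × (Fin d → ℝ) => |ρ j p.1 p.2| * Real.exp (-β * (N p.2 ^ 2 + 1)))
        (Set.Ioc 0 T ×ˢ Set.univ)) :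
    ∀ t ∈ Set.Icc (0:ℝ) T, ∀ x, ρ 0 t x = ρ 1 t x := by
  obtain ⟨α, -, hα⟩ := hint 0
  obtain ⟨β, -, hβ⟩ := hint 1
  have hX (i : Fin m) : ContDiff ℝ 1 (X i) := (hXsm i).of_le (mod_cast le_top)
  have hIcc {t : ℝ} (ht : t ∈ Ioo 0 T) : t ∈ Icc 0 T := Ioo_subset_Icc_self ht
  have hρ (j : Fin 2) : IsClassicalSolution X σ T B Q (ρ j) :=
    ⟨hρcont j, hρt j, hρx j, hρtcont j, hPDE j⟩
  have hN_tendsto : Filter.Tendsto (fun x => N x ^ 2) (Filter.cocompact _) Filter.atTop :=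
    (Filter.tendsto_pow_atTop two_ne_zero).comp (tendsto_cocompact_of_rpow_norm_le hc₀ hε₀ hcoerc)
  have hV : IsLyapunov X σ T B Q (fun x => N x ^ 2 + 1) _ :=
    isLyapunov_add_one hσ.le hNC2 (fun x => sq_nonneg _) hN_tendsto hgrad hlap
      (fun t ht => hBbd t (hIcc ht)) (fun t ht x => le_of_abs_le (hdivBbd t (hIcc ht) x))
      (fun t ht x => neg_le_of_abs_le (hQbd t (hIcc ht) x))
  exact linear_subelliptic_uniqueness_general hX hXdivfree hσ.le (fun t ht => hBC1 t (hIcc ht)) hV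
    (hρ 0) (hρ 1) hα hβ fun x => (hinit 0 x).trans (hinit 1 x).symm
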